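/- Let 0 < a ≤ 1/√2 and let k ≥ 2 be an integer. With H_k(1) as defined, det H_k(1) = a_k · a²(a²−1)·((1−a²)(1/2−a²) + 1/(4(k+1)²)), where a_k := [(1!·2!⋯(k−1)!)² · (2!·3!⋯(k+1)!) / (2^{k−1}·(k+2)!·(k+3)!⋯(2k+1)!)] · k(k+2). -/

import Mathlib

noncomputable section

/-- The entry function `g`: `g(0,0) = 2`, `g(m,0) = (m+2)/(m+1)` for `m ≥ 1`,
`g(0,n) = 2` for `n ≥ 1`, `g(m,n) = 2a²` for `m, n ≥ 1`. -/
def gfun (a : ℝ) : ℕ × ℕ → ℝ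
  | (0, 0) => 2
  | (m + 1, 0) => ((m : ℝ) + 3) / ((m : ℝ) + 2)
  | (0, _ + 1) => 2
  | (_ + 1, _ + 1) => 2 * a ^ 2

/-- The enumeration of the index set `S = {(0,0),(1,0),(0,1),(1,1),(2,0),(3,0),…,(k,0)}`. -/
def Sidx : ℕ → ℕ × ℕ
  | 0 => (0, 0)
  | 1 => (1, 0)
  | 2 => (0, 1)
  | 3 => (1, 1)
  | i + 4 => (i + 2, 0)

/-- The `(k+3)×(k+3)` matrix `H_k(1)` with entries `(1/2)·g(u+v)` for `u, v ∈ S`. -/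
def Hk1 (a : ℝ) (k : ℕ) : Matrix (Fin (k + 3)) (Fin (k + 3)) ℝ :=
  fun i j => (1 / 2) * gfun a (Sidx (i : ℕ) + Sidx (j : ℕ))

/-- The constant `a_k`. -/
def akConst (k : ℕ) : ℝ :=
  ((∏ i ∈ Finset.Icc 1 (k - 1), (Nat.factorial i : ℝ)) ^ 2 *
      (∏ i ∈ Finset.Icc 2 (k + 1), (Nat.factorial i : ℝ)) /
      (2 ^ (k - 1) * ∏ i ∈ Finset.Icc (k + 2) (2 * k + 1), (Nat.factorial i : ℝ))) *
    ((k : ℝ) * ((k : ℝ) + 2))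

open Finset Polynomial

def yn (j : ℕ) : ℝ := -((j : ℝ) + 1)
def xn (j : ℕ) : ℝ := (j : ℝ)
noncomputable def Wt (n j : ℕ) : ℝ := ∏ m ∈ (range n).erase j, (yn j - yn m)⁻¹

lemma yn_inj (s : Set ℕ) : Set.InjOn yn s := by
  intro a _ b _ h
  simp only [yn] at h
  exact_mod_cast (by linarith : (a : ℝ) = b)

lemma interp (n : ℕ) (P : ℝ[X]) (hP : P.degree < n) (l : ℕ) :
    P.eval (xn l) = (∏ m ∈ range n, (xn l - yn m)) *
      ∑ j ∈ range n, Wt n j * (xn l - yn j)⁻¹ * P.eval (yn j) := by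
  have h1 := Lagrange.eq_interpolate (s := range n) (v := yn) (yn_inj _) (f := P) (by simpa using hP)
  have h2 := Lagrange.eval_interpolate_not_at_node (s := range n) (v := yn) (x := xn l)
    (fun i => P.eval (yn i)) (by
      intro i _ h
      simp only [xn, yn] at h
      have : (0:ℝ) ≤ l := by positivity
      have : (0:ℝ) ≤ i := by positivity
      linarith)
  rw [← h1, Lagrange.eval_nodal] at h2
  exact h2

lemma xy_ne (l m : ℕ) : xn l - yn m ≠ 0 := by
  simp only [xn, yn]
  have : (0:ℝ) ≤ l := by positivity
  have : (0:ℝ) ≤ m := by positivity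
  intro h; linarith

lemma prodxy_ne (n l : ℕ) : (∏ m ∈ range n, (xn l - yn m)) ≠ 0 :=
  prod_ne_zero_iff.2 fun m _ => xy_ne l m

/-- solution of `H u = e_i` -/
noncomputable def uvec (n i j : ℕ) : ℝ :=
  (∏ m ∈ range n, (xn i - yn m)) / (∏ m ∈ (range n).erase i, (xn i - xn m)) *
   (Wt n j * ∏ m ∈ (range n).erase i, (yn j - xn m))

noncomputable def vvec (n j : ℕ) : ℝ := - (Wt n j * ∏ m ∈ range n, (yn j - xn m))

lemma uvec_spec (n i l : ℕ) (hi : i < n) (hl : l < n) :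
    ∑ j ∈ range n, uvec n i j * ((l : ℝ) + j + 1)⁻¹ = if l = i then 1 else 0 := by
  have hd : (Lagrange.nodal ((range n).erase i) xn).degree < n := by
    rw [Lagrange.degree_nodal, card_erase_of_mem (mem_range.2 hi), card_range]
    exact_mod_cast (by omega : n - 1 < n)
  have h := interp n _ hd l
  simp only [Lagrange.eval_nodal] at h
  have key : ∑ j ∈ range n, uvec n i j * ((l : ℝ) + j + 1)⁻¹ =
     (∏ m ∈ range n, (xn i - yn m)) / (∏ m ∈ (range n).erase i, (xn i - xn m)) *
      ∑ j ∈ range n, Wt n j * (xn l - yn j)⁻¹ * ∏ m ∈ (range n).erase i, (yn j - xn m) := by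
    rw [mul_sum]
    refine sum_congr rfl fun j _ => ?_
    have : (l : ℝ) + j + 1 = xn l - yn j := by simp [xn, yn]; ring
    rw [this, uvec]; ring
  rw [key]
  split_ifs with hli
  · subst hli
    have hne : (∏ m ∈ (range n).erase l, (xn l - xn m)) ≠ 0 := by
      refine prod_ne_zero_iff.2 fun m hm => ?_
      simp only [xn, sub_ne_zero]
      exact_mod_cast (mem_erase.1 hm).1.symm
    rw [div_mul_eq_mul_div, ← h, div_self hne]
  · have hz : (∏ m ∈ (range n).erase i, (xn l - xn m)) = 0 :=
      prod_eq_zero (i := l) (by simp [hli, hl]) (by simp)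
    rw [hz] at h
    rcases mul_eq_zero.1 h.symm with h | h
    · exact absurd h (prodxy_ne n l)
    · rw [h, mul_zero]

lemma nodal_diff_degree (n : ℕ) :
    (Lagrange.nodal (range n) yn - Lagrange.nodal (range n) xn).degree < n := by
  have := degree_sub_lt_left (p := Lagrange.nodal (range n) yn) (q := Lagrange.nodal (range n) xn)
    (by simp [Lagrange.degree_nodal]) (Lagrange.nodal_ne_zero)
    (by rw [Lagrange.nodal_monic.leadingCoeff, Lagrange.nodal_monic.leadingCoeff])
  simpa [Lagrange.degree_nodal] using this

lemma vvec_eq (n j : ℕ) (hj : j ∈ range n) : vvec n j =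
    Wt n j * (Lagrange.nodal (range n) yn - Lagrange.nodal (range n) xn).eval (yn j) := by
  rw [eval_sub, Lagrange.eval_nodal_at_node hj, Lagrange.eval_nodal, vvec]; ring

lemma vvec_spec (n l : ℕ) (hl : l < n) :
    ∑ j ∈ range n, vvec n j * ((l : ℝ) + j + 1)⁻¹ = 1 := by
  have h := interp n _ (nodal_diff_degree n) l
  have key : ∑ j ∈ range n, vvec n j * ((l : ℝ) + j + 1)⁻¹ =
      ∑ j ∈ range n, Wt n j * (xn l - yn j)⁻¹ *
       (Lagrange.nodal (range n) yn - Lagrange.nodal (range n) xn).eval (yn j) := by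
    refine sum_congr rfl fun j hj => ?_
    have : (l : ℝ) + j + 1 = xn l - yn j := by simp [xn, yn]; ring
    rw [this, vvec_eq n j hj]; ring
  rw [key]
  have h0 : (Lagrange.nodal (range n) yn - Lagrange.nodal (range n) xn).eval (xn l)
      = ∏ m ∈ range n, (xn l - yn m) := by
    rw [eval_sub, Lagrange.eval_nodal_at_node (mem_range.2 hl), Lagrange.eval_nodal, sub_zero]
  rw [h0] at h
  exact (mul_left_cancel₀ (prodxy_ne n l) (by rw [mul_one]; exact h)).symm

lemma vvec_sum (n : ℕ) (hn : 0 < n) : ∑ j ∈ range n, vvec n j = (n : ℝ) ^ 2 := by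
  have h := Lagrange.coeff_eq_sum (s := range n) (v := yn) (yn_inj _)
    (P := Lagrange.nodal (range n) yn - Lagrange.nodal (range n) xn)
    (by simpa using nodal_diff_degree n)
  have key : ∑ j ∈ range n, vvec n j = ∑ i ∈ range n,
      (Lagrange.nodal (range n) yn - Lagrange.nodal (range n) xn).eval (yn i) /
        ∏ j ∈ (range n).erase i, (yn i - yn j) := by
    refine sum_congr rfl fun j hj => ?_
    rw [vvec_eq n j hj, Wt, prod_inv_distrib]; ring
  rw [key, ← h, coeff_sub, Lagrange.nodal, Lagrange.nodal,
    prod_X_sub_C_coeff_card_pred _ _ (by simpa using hn),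
    prod_X_sub_C_coeff_card_pred _ _ (by simpa using hn)]
  clear h key hn
  induction n with
  | zero => simp
  | succ n ih =>
    simp only [sum_range_succ, xn, yn] at ih ⊢
    push_cast
    linarith

lemma prod_erase_zero (k : ℕ) (f : ℕ → ℝ) :
    ∏ m ∈ (range (k+1)).erase 0, f m = ∏ m ∈ range k, f (m+1) := by
  have : (range (k+1)).erase 0 = (range k).image Nat.succ := by
    ext x; cases x <;> simp
  rw [this, prod_image (by intro a _ b _ h; simpa using h)]

lemma prod_erase_last (k : ℕ) (f : ℕ → ℝ) :
    ∏ m ∈ (range (k+1)).erase k, f m = ∏ m ∈ range k, f m := by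
  congr 1; ext x; simp; omega

lemma prod_fact (k : ℕ) : ∏ m ∈ range k, ((m : ℝ) + 1) = (k.factorial : ℝ) := by
  rw [← prod_range_add_one_eq_factorial]; push_cast; rfl

lemma prod_fact2 (k n : ℕ) : ∏ m ∈ range k, ((n : ℝ) + m + 1) = ((n+k).factorial : ℝ) / n.factorial := by
  induction k with
  | zero => simp [Nat.factorial_ne_zero]
  | succ k ih =>
    rw [prod_range_succ, ih, ← add_assoc, Nat.factorial_succ]; push_cast; ring

lemma prod_fact_rev (k : ℕ) : ∏ m ∈ range k, ((k : ℝ) - m) = (k.factorial : ℝ) := by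
  rw [← prod_fact, ← prod_range_reflect]
  refine prod_congr rfl fun m hm => ?_
  have hm := mem_range.1 hm
  have : k - 1 - m = k - (m+1) := by omega
  rw [this, Nat.cast_sub (by omega)]; push_cast; ring

lemma Wt_zero (k : ℕ) : Wt (k+1) 0 = (k.factorial : ℝ)⁻¹ := by
  rw [Wt, prod_erase_zero, prod_inv_distrib, ← prod_fact]
  congr 1
  refine prod_congr rfl fun m _ => ?_
  simp [yn]

lemma vvec_zero_sq (k : ℕ) : vvec (k+1) 0 ^ 2 = ((k:ℝ)+1)^2 := by
  have : ∏ m ∈ range (k+1), (yn 0 - xn m) = (-1)^(k+1) * ((k+1).factorial : ℝ) := by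
    rw [← prod_fact, show ((-1:ℝ))^(k+1) = ∏ _m ∈ range (k+1), (-1:ℝ) by simp, ← prod_mul_distrib]
    refine prod_congr rfl fun m _ => ?_
    simp [yn, xn]; ring
  rw [vvec, this, Wt_zero, Nat.factorial_succ]
  have : (k.factorial : ℝ) ≠ 0 := by exact_mod_cast k.factorial_ne_zero
  have h2 : ((-1:ℝ)^(k+1))^2 = 1 := by rw [← pow_mul, mul_comm, pow_mul]; simp
  push_cast
  generalize (-1:ℝ)^(k+1) = t at h2
  field_simp
  linear_combination h2

lemma uvec_zero (k : ℕ) : uvec (k+1) 0 0 = ((k:ℝ)+1)^2 := by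
  have h1 : ∏ m ∈ range (k+1), (xn 0 - yn m) = ((k+1).factorial : ℝ) := by
    rw [← prod_fact]
    refine prod_congr rfl fun m _ => ?_
    simp [yn, xn]
  have h2 : ∏ m ∈ range k, (xn 0 - xn (m+1)) = (-1)^k * (k.factorial : ℝ) := by
    rw [← prod_fact, show ((-1:ℝ))^k = ∏ _m ∈ range k, (-1:ℝ) by simp, ← prod_mul_distrib]
    refine prod_congr rfl fun m _ => ?_
    simp [xn]
  have h3 : ∏ m ∈ range k, (yn 0 - xn (m+1)) = (-1)^k * ((k+1).factorial : ℝ) := by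
    rw [← prod_fact, show ((-1:ℝ))^k = ∏ _m ∈ range k, (-1:ℝ) by simp, prod_range_succ']
    simp only [Nat.cast_zero, zero_add, mul_one]
    rw [← prod_mul_distrib]
    refine prod_congr rfl fun m _ => ?_
    simp [xn, yn]; ring
  rw [uvec, prod_erase_zero, prod_erase_zero, h1, h2, h3, Wt_zero, Nat.factorial_succ]
  have : (k.factorial : ℝ) ≠ 0 := by exact_mod_cast k.factorial_ne_zero
  push_cast
  field_simp

lemma uvec_last (k : ℕ) : uvec (k+1) k k =
    ((2*k+1).factorial : ℝ) * ((2*k).factorial : ℝ) / (k.factorial : ℝ)^4 := by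
  have h1 : ∏ m ∈ range (k+1), (xn k - yn m) = ((2*k+1).factorial : ℝ) / k.factorial := by
    rw [show 2*k+1 = k + (k+1) by ring, ← prod_fact2]
    refine prod_congr rfl fun m _ => ?_
    simp [yn, xn]; ring
  have h2 : ∏ m ∈ range k, (xn k - xn m) = (k.factorial : ℝ) := prod_fact_rev k
  have h3 : ∏ m ∈ range k, (yn k - xn m) = (-1)^k * (((2*k).factorial : ℝ) / k.factorial) := by
    rw [show 2*k = k + k by ring, ← prod_fact2, show ((-1:ℝ))^k = ∏ _m ∈ range k, (-1:ℝ) by simp,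
      ← prod_mul_distrib]
    refine prod_congr rfl fun m _ => ?_
    simp [xn, yn]; ring
  have h4 : Wt (k+1) k = ((-1)^k * (k.factorial : ℝ))⁻¹ := by
    rw [Wt, prod_erase_last, prod_inv_distrib, ← prod_fact_rev,
      show ((-1:ℝ))^k = ∏ _m ∈ range k, (-1:ℝ) by simp, ← prod_mul_distrib]
    congr 1
    refine prod_congr rfl fun m _ => ?_
    simp [yn]; ring
  rw [uvec, prod_erase_last, prod_erase_last, h1, h2, h3, h4]
  have : (k.factorial : ℝ) ≠ 0 := by exact_mod_cast k.factorial_ne_zero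
  field_simp

lemma uvec_sum (n : ℕ) (hn : 0 < n) : ∑ j ∈ range n, uvec n 0 j = vvec n 0 := by
  have h1 : ∑ j ∈ range n, uvec n 0 j =
      ∑ j ∈ range n, ∑ i ∈ range n, uvec n 0 j * (vvec n i * ((j : ℝ) + i + 1)⁻¹) := by
    refine sum_congr rfl fun j hj => ?_
    rw [← mul_sum, vvec_spec n j (mem_range.1 hj), mul_one]
  rw [h1, sum_comm]
  have h2 : ∀ i ∈ range n, ∑ j ∈ range n, uvec n 0 j * (vvec n i * ((j : ℝ) + i + 1)⁻¹) =
      if i = 0 then vvec n i else 0 := by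
    intro i hi
    have := uvec_spec n 0 i hn (mem_range.1 hi)
    rw [show (if i = 0 then vvec n i else 0) = vvec n i * (if i = 0 then 1 else 0) by simp, ← this,
      mul_sum]
    refine sum_congr rfl fun j _ => ?_
    rw [add_comm (j:ℝ) i]; ring
  rw [sum_congr rfl h2, sum_ite_eq' (range n) 0]
  simp [hn.ne']

/-- Hilbert matrix -/
noncomputable def Hil (n : ℕ) : Matrix (Fin n) (Fin n) ℝ :=
  fun i j => ((i : ℝ) + (j : ℝ) + 1)⁻¹

lemma Hil_mulVec (n : ℕ) (u : ℕ → ℝ) (i : Fin n) :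
    (Hil n).mulVec (fun j => u j) i = ∑ j ∈ range n, u j * (((i:ℕ) : ℝ) + j + 1)⁻¹ := by
  rw [sum_range]
  simp only [Matrix.mulVec, dotProduct, Hil]
  exact sum_congr rfl fun j _ => mul_comm _ _

lemma Hil_det_succ (k : ℕ) : (Hil (k+1)).det * uvec (k+1) k k = (Hil k).det := by
  have h : (Hil (k+1)).mulVec (fun j => uvec (k+1) k j) = Pi.single (Fin.last k) 1 := by
    ext i
    rw [Hil_mulVec, uvec_spec (k+1) k i (by omega) i.2, Pi.single_apply]
    simp [Fin.ext_iff]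
  have h2 := congrArg ((Hil (k+1)).adjugate.mulVec) h
  rw [Matrix.mulVec_mulVec, Matrix.adjugate_mul, Matrix.smul_mulVec, Matrix.one_mulVec] at h2
  have h3 := congrFun h2 (Fin.last k)
  simp only [Pi.smul_apply, Fin.val_last, smul_eq_mul, Matrix.mulVec_single_one, Matrix.col_apply] at h3
  rw [h3, Matrix.adjugate_fin_succ_eq_det_submatrix]
  have : (-1:ℝ)^((Fin.last k : ℕ) + (Fin.last k : ℕ)) = 1 := by
    rw [← two_mul, pow_mul]; simp
  rw [this, one_mul]
  congr 1
  ext i j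
  simp [Hil]

lemma Hil_det (k : ℕ) : (Hil k).det * ∏ i ∈ range (2*k), (i.factorial : ℝ) =
    (∏ i ∈ range k, (i.factorial : ℝ))^4 := by
  induction k with
  | zero => simp [Hil]
  | succ k ih =>
    have h := Hil_det_succ k
    rw [uvec_last] at h
    have : (k.factorial : ℝ) ≠ 0 := by exact_mod_cast k.factorial_ne_zero
    rw [show 2*(k+1) = 2*k+1+1 by ring, prod_range_succ, prod_range_succ, prod_range_succ, mul_pow,
      ← ih, ← h]
    field_simp

lemma Hil_det_ne (k : ℕ) : (Hil k).det ≠ 0 := by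
  intro h
  have := Hil_det k
  rw [h, zero_mul] at this
  have h2 : (∏ i ∈ range k, (i.factorial : ℝ)) ≠ 0 :=
    prod_ne_zero_iff.2 fun i _ => by exact_mod_cast i.factorial_ne_zero
  exact pow_ne_zero 4 h2 this.symm

noncomputable def Mk (n : ℕ) : Matrix (Fin n) (Fin n) ℝ :=
  fun i j => (1 / 2) * (1 + ((i : ℝ) + (j : ℝ) + 1)⁻¹)

lemma Mk_eq (n : ℕ) (hn : 0 < n) : Mk n = (1/2 : ℝ) • (Hil n *
    (1 + Matrix.replicateCol Unit (fun j : Fin n => vvec n j) *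
      Matrix.replicateRow Unit (fun _ : Fin n => (1:ℝ)))) := by
  have h : (Hil n).mulVec (fun j => vvec n j) = fun _ => 1 := by
    ext i
    rw [Hil_mulVec, vvec_spec n i i.2]
  rw [Matrix.mul_add, Matrix.mul_one, ← Matrix.mul_assoc, ← Matrix.replicateCol_mulVec, h]
  ext i j
  simp [Mk, Hil, Matrix.mul_apply]
  ring

lemma Mk_det (n : ℕ) (hn : 0 < n) :
    (Mk n).det = (1/2 : ℝ)^n * ((Hil n).det * (1 + (n:ℝ)^2)) := by
  rw [Mk_eq n hn, Matrix.det_smul, Matrix.det_mul, Matrix.det_one_add_replicateCol_mul_replicateRow,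
    Fintype.card_fin]
  congr 3
  rw [← vvec_sum n hn, sum_range]
  simp [dotProduct]

lemma Mk_mulVec (n : ℕ) (u : ℕ → ℝ) (i : Fin n) :
    ∑ j : Fin n, Mk n i j * u j = (1/2) * (∑ j ∈ range n, u j +
      ∑ j ∈ range n, u j * (((i:ℕ) : ℝ) + j + 1)⁻¹) := by
  rw [← sum_add_distrib, sum_range, mul_sum]
  refine sum_congr rfl fun j _ => ?_
  simp only [Mk]; ring

/-- the columns of `M⁻¹ B` -/
noncomputable def Xk (b : ℝ) (n : ℕ) (c : Fin 2) (j : ℕ) : ℝ :=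
  b * (2 / (1 + (n:ℝ)^2) * vvec n j) + (if c = 0 then 1 - b else 0) *
    (2 * uvec n 0 j - vvec n 0 * (2 / (1 + (n:ℝ)^2) * vvec n j))

lemma Xk_spec (b : ℝ) (n : ℕ) (hn : 0 < n) (c : Fin 2) (i : Fin n) :
    ∑ j : Fin n, Mk n i j * Xk b n c j =
      b + (if c = 0 then 1 - b else 0) * (if (i:ℕ) = 0 then 1 else 0) := by
  have hv : ∑ j : Fin n, Mk n i j * vvec n j = (1/2) * ((n:ℝ)^2 + 1) := by
    rw [Mk_mulVec, vvec_sum n hn, vvec_spec n i i.2]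
  have hu : ∑ j : Fin n, Mk n i j * uvec n 0 j =
      (1/2) * (vvec n 0 + (if (i:ℕ) = 0 then 1 else 0)) := by
    rw [Mk_mulVec, uvec_sum n hn, uvec_spec n 0 i hn i.2]
  have : ∑ j : Fin n, Mk n i j * Xk b n c j =
      (b * (2 / (1 + (n:ℝ)^2)) - (if c = 0 then 1 - b else 0) * vvec n 0 * (2 / (1 + (n:ℝ)^2))) *
        ∑ j : Fin n, Mk n i j * vvec n j +
      (if c = 0 then 1 - b else 0) * 2 * ∑ j : Fin n, Mk n i j * uvec n 0 j := by
    rw [mul_sum, mul_sum, ← sum_add_distrib]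
    refine sum_congr rfl fun j _ => ?_
    simp only [Xk]; ring
  rw [this, hv, hu]
  have : 1 + (n:ℝ)^2 ≠ 0 := by positivity
  field_simp
  ring

lemma Xk_sum (b : ℝ) (n : ℕ) (hn : 0 < n) (c : Fin 2) :
    ∑ j : Fin n, Xk b n c j = b * (2 / (1 + (n:ℝ)^2) * (n:ℝ)^2) + (if c = 0 then 1 - b else 0) *
    (2 * vvec n 0 - vvec n 0 * (2 / (1 + (n:ℝ)^2) * (n:ℝ)^2)) := by
  rw [← sum_range (fun j => Xk b n c j)]
  simp only [Xk, sum_add_distrib, ← mul_sum, sum_sub_distrib]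
  rw [vvec_sum n hn, uvec_sum n hn]

/-- the columns `B` -/
noncomputable def Bk (b : ℝ) (n : ℕ) : Matrix (Fin n) (Fin 2) ℝ :=
  fun i c => b + (if c = 0 then 1 - b else 0) * (if (i:ℕ) = 0 then 1 else 0)

lemma block_det (b : ℝ) (k : ℕ) :
    (Matrix.fromBlocks (Mk (k+1)) (Bk b (k+1)) (Bk b (k+1)).transpose !![1, b; b, b]).det =
      (1/2 : ℝ)^(k+1) * (Hil (k+1)).det * (b * (b - 1) * (k * (k+2)) *
        (4 * ((k:ℝ)+1)^2 * ((1 - b) * (1/2 - b)) + 1)) := by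
  set X : Matrix (Fin (k+1)) (Fin 2) ℝ := fun j c => Xk b (k+1) c j with hX
  have hMX : Mk (k+1) * X = Bk b (k+1) := by
    ext i c
    rw [Matrix.mul_apply]
    exact Xk_spec b (k+1) (by omega) c i
  have hf : Matrix.fromBlocks (Mk (k+1)) (Bk b (k+1)) (Bk b (k+1)).transpose !![1, b; b, b] =
      Matrix.fromBlocks (Mk (k+1)) 0 (Bk b (k+1)).transpose
        (!![1, b; b, b] - (Bk b (k+1)).transpose * X) * Matrix.fromBlocks 1 X 0 1 := by
    rw [Matrix.fromBlocks_multiply]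
    simp [hMX]
  have hCX : ∀ r c, ((Bk b (k+1)).transpose * X) r c = b * (∑ j : Fin (k+1), Xk b (k+1) c j)
      + (if r = 0 then 1 - b else 0) * Xk b (k+1) c 0 := by
    intro r c
    rw [Matrix.mul_apply]
    simp only [Matrix.transpose_apply, Bk, hX, add_mul, sum_add_distrib, ← mul_sum, mul_assoc]
    congr 2
    rw [Fin.sum_univ_succ]
    simp
  rw [hf, Matrix.det_mul, Matrix.det_fromBlocks_zero₁₂, Matrix.det_fromBlocks_zero₂₁,
    Matrix.det_one, Matrix.det_one, Mk_det _ (by omega), Matrix.det_fin_two]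
  simp only [Matrix.sub_apply, hCX, Xk_sum b (k+1) (by omega)]
  simp only [Xk, uvec_zero]
  have hq := vvec_zero_sq k
  generalize vvec (k+1) 0 = q at hq
  push_cast
  simp only [Matrix.of_apply, Matrix.cons_val', Matrix.cons_val_zero, Matrix.cons_val_one,
    Matrix.cons_val_fin_one, zero_mul, add_zero, mul_one,
    show ((1 : Fin 2) = 0) = False by simp, if_false, if_true]
  generalize (1/2:ℝ)^(k+1) = t
  have hk : (k:ℝ) = ((k:ℝ) + 1) - 1 := by ring
  have hpos : 1 + ((k:ℝ)+1)^2 ≠ 0 := by positivity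
  generalize (k:ℝ) + 1 = n at *
  rw [hk]
  field_simp
  linear_combination (t * (Hil (k + 1)).det * b * 4 * (1 - b)^2 * (1 + n^2) * (1 - 2 * b)) * hq

def sigmaFun (k : ℕ) (hk : 2 ≤ k) : Fin (k+1) ⊕ Fin 2 → Fin (k+3)
  | Sum.inl i => if (i:ℕ) < 2 then ⟨i, by omega⟩ else ⟨i + 2, by omega⟩
  | Sum.inr c => ⟨c + 2, by omega⟩

lemma sigma_inj (k : ℕ) (hk : 2 ≤ k) : Function.Injective (sigmaFun k hk) := by
  rintro (i | i) (j | j) h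
  · simp only [sigmaFun] at h
    congr 1; ext
    split_ifs at h <;> simp at h <;> omega
  · simp only [sigmaFun] at h
    split_ifs at h <;> simp at h <;> omega
  · simp only [sigmaFun] at h
    split_ifs at h <;> simp at h <;> omega
  · simp only [sigmaFun] at h
    congr 1; ext
    simp at h; omega

noncomputable def sigmaE (k : ℕ) (hk : 2 ≤ k) : Fin (k+1) ⊕ Fin 2 ≃ Fin (k+3) :=
  Equiv.ofBijective (sigmaFun k hk)
    ((Fintype.bijective_iff_injective_and_card _).2 ⟨sigma_inj k hk, by simp⟩)

lemma Sidx_inl (k : ℕ) (hk : 2 ≤ k) (i : Fin (k+1)) :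
    Sidx (sigmaE k hk (Sum.inl i) : Fin (k+3)) = ((i:ℕ), 0) := by
  rw [sigmaE, Equiv.ofBijective_apply, sigmaFun]
  obtain ⟨i, hi⟩ := i
  match i with
  | 0 => rfl
  | 1 => rfl
  | i + 2 => simp [Sidx]

lemma Sidx_inr (k : ℕ) (hk : 2 ≤ k) (c : Fin 2) :
    Sidx (sigmaE k hk (Sum.inr c) : Fin (k+3)) = ((c:ℕ), 1) := by
  rw [sigmaE, Equiv.ofBijective_apply, sigmaFun]
  fin_cases c <;> rfl

lemma gfun_zero (a : ℝ) (m : ℕ) : gfun a (m, 0) = 1 + ((m:ℝ) + 1)⁻¹ := by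
  cases m with
  | zero => norm_num [gfun]
  | succ m =>
    simp only [gfun]; push_cast
    have : (m:ℝ) + 2 ≠ 0 := by positivity
    have : (m:ℝ) + 1 + 1 ≠ 0 := by positivity
    field_simp
    ring

lemma gfun_succ (a : ℝ) (m n : ℕ) : gfun a (m, n + 1) = if m = 0 then 2 else 2 * a^2 := by
  cases m <;> simp [gfun]

lemma Hk1_blocks (a : ℝ) (k : ℕ) (hk : 2 ≤ k) :
    (Hk1 a k).submatrix (sigmaE k hk) (sigmaE k hk) =
      Matrix.fromBlocks (Mk (k+1)) (Bk (a^2) (k+1)) (Bk (a^2) (k+1)).transpose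
        !![1, a^2; a^2, a^2] := by
  ext i j
  rcases i with i | i <;> rcases j with j | j <;>
    simp only [Matrix.submatrix_apply, Hk1, Sidx_inl, Sidx_inr, Prod.mk_add_mk,
      Matrix.fromBlocks_apply₁₁, Matrix.fromBlocks_apply₁₂, Matrix.fromBlocks_apply₂₁,
      Matrix.fromBlocks_apply₂₂, Matrix.transpose_apply]
  · rw [gfun_zero, Mk]; push_cast; ring
  · rw [gfun_succ, Bk]
    fin_cases j <;> by_cases h : (i:ℕ) = 0 <;> simp [h]
  · rw [show 1 + 0 = 0 + 1 from rfl, gfun_succ, Bk]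
    fin_cases i <;> by_cases h : (j:ℕ) = 0 <;> simp [h]
  · rw [gfun_succ]
    fin_cases i <;> fin_cases j <;> simp

lemma icc_one (k : ℕ) : ∏ i ∈ Icc 1 (k + 1), (Nat.factorial i : ℝ) =
    ∏ i ∈ range (k + 2), (Nat.factorial i : ℝ) := by
  rw [range_eq_Ico, prod_eq_prod_Ico_succ_bot (by omega)]
  simp; rfl

lemma akConst_eq (k : ℕ) (hk : 2 ≤ k) :
    akConst k = (1/2 : ℝ)^(k+1) * (Hil (k+1)).det * (4 * ((k:ℝ)+1)^2) * (k * (k+2)) := by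
  obtain ⟨m, rfl⟩ : ∃ m, k = m + 2 := ⟨k - 2, by omega⟩
  have hD := Hil_det (m + 2 + 1)
  have e1 : ∏ i ∈ Icc 1 (m + 2 - 1), (Nat.factorial i : ℝ) = ∏ i ∈ range (m + 2), (i.factorial : ℝ) := by
    rw [show m + 2 - 1 = m + 1 by omega, icc_one]
  have e2 : ∏ i ∈ Icc 2 (m + 2 + 1), (Nat.factorial i : ℝ) = ∏ i ∈ range (m + 4), (i.factorial : ℝ) := by
    rw [← icc_one (m+2), ← Finset.insert_Icc_succ_left_eq_Icc (a := 1) (by omega), prod_insert (by simp)]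
    simp
  have e3 : (∏ i ∈ range (m + 4), (i.factorial : ℝ)) *
      ∏ i ∈ Icc (m + 2 + 2) (2 * (m + 2) + 1), (Nat.factorial i : ℝ) =
      ∏ i ∈ range (2 * (m + 2 + 1)), (i.factorial : ℝ) := by
    rw [range_eq_Ico, range_eq_Ico,
      ← prod_Ico_consecutive _ (show 0 ≤ m + 4 by omega) (show m + 4 ≤ 2 * (m + 2 + 1) by omega)]
    rfl
  have hc : ∀ s : Finset ℕ, ∏ i ∈ s, (i.factorial : ℝ) ≠ 0 := fun s =>
    prod_ne_zero_iff.2 fun i _ => by exact_mod_cast i.factorial_ne_zero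
  have h3 := hc (Icc (m + 2 + 2) (2 * (m + 2) + 1))
  have h4 := hc (range (m + 2))
  rw [← e3, prod_range_succ _ (m+3), prod_range_succ _ (m+2)] at hD
  rw [akConst, e1, e2, prod_range_succ _ (m+3), prod_range_succ _ (m+2),
    show m + 2 - 1 = m + 1 by omega]
  generalize ∏ i ∈ Icc (m + 2 + 2) (2 * (m + 2) + 1), (Nat.factorial i : ℝ) = T at *
  generalize ∏ i ∈ range (m + 2), (i.factorial : ℝ) = c at *
  generalize (Hil (m+2+1)).det = D at *
  rw [Nat.factorial_succ (m+2)] at *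
  have h5 : ((m+2).factorial : ℝ) ≠ 0 := by exact_mod_cast Nat.factorial_ne_zero _
  generalize (m+2).factorial = f at *
  push_cast at *
  have h6 : (m:ℝ) + 2 + 1 ≠ 0 := by positivity
  have hD' : D * ((m:ℝ) + 2 + 1) * T = c^3 * f^2 := by
    have : c * f^2 ≠ 0 := by positivity
    apply mul_left_cancel₀ this
    linear_combination hD
  rw [pow_succ (1/2:ℝ) (m+2), pow_succ (1/2:ℝ) (m+1), one_div_pow]
  field_simp
  linear_combination (-4) * hD'

/-- For `0 < a ≤ 1/√2` and `k ≥ 2`: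
`det H_k(1) = a_k · a²(a²−1)·((1−a²)(1/2−a²) + 1/(4(k+1)²))`. -/
theorem det_Hk1_formula (a : ℝ) (ha : 0 < a) (ha' : a ≤ 1 / Real.sqrt 2)
    (k : ℕ) (hk : 2 ≤ k) :
    (Hk1 a k).det =
      akConst k * (a ^ 2 * (a ^ 2 - 1) *
        ((1 - a ^ 2) * (1 / 2 - a ^ 2) + 1 / (4 * ((k : ℝ) + 1) ^ 2))) := by
  rw [← Matrix.det_submatrix_equiv_self (sigmaE k hk), Hk1_blocks, block_det, akConst_eq k hk]
  have : (k:ℝ) + 1 ≠ 0 := by positivity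
  field_simp
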